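/- Let V be a (finite or infinite) set and let c be a 2-coloring of the complete digraph on V. Then V can be covered by at most 8 monochromatic 2-dominating subgraphs. -/

import Mathlib

/-- The two colors for 2-colorings of complete digraphs. -/
inductive Color where
  | red : Color
  | blue : Color

/-- `U`, together with the color `j`, is the vertex set of a monochromatic `d`-dominating
subgraph of the complete digraph on `V` 2-colored by `c`. -/
def IsMonoDom {V : Type*} (c : V → V → Color) (d : ℕ) (j : Color) (U : Set V) : Prop :=
  ∀ S : Finset V, ↑S ⊆ U → S.Nonempty → S.card ≤ d →
    ∃ w ∈ U, ∀ s ∈ S, c s w = j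

/-! A 2-dominating set is one directed for the edge relation. Let `r` be one color class, so `rᶜ` is
the other, and let `A` be the set of vertices with an `r`-loop. It suffices to cover `A` by four
sets, each directed for `r` or for `rᶜ`: the remaining vertices are those with an `rᶜ`-loop. For
`x ∈ A` the star of `r`-in-neighbors of `x` in `A` is `r`-directed, because `x` dominates all of it.

If `u`, `v`, `w` are pairwise joined by `rᶜ`-edges in both directions (that is, related by
`AntisymmRel rᶜ`), with `u, v ∈ A`, then the stars of `u` and `v` leave only vertices that send
`rᶜ`-edges to both `u` and `v`, and these form an `rᶜ`-directed set once `u` and `v` are added;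
`w` serves to dominate the pair `u`, `v`.

If there is no such triangle, then for `u ∈ A` the vertices of `A` joined to `u` by `rᶜ`-edges in
both directions form an `r`-directed set. If `A` is not `r`-directed itself, some `u, v ∈ A` have no
common `r`-out-neighbor in `A`, and every vertex of `A` outside the stars of `u` and `v` is joined
in this way to `u` or to `v`. -/

section

variable {V : Type*}

theorem isMonoDom_two_iff_directedOn {c : V → V → Color} {j : Color} {U : Set V} :
    IsMonoDom c 2 j U ↔ DirectedOn (c · · = j) U := by
  classical
  constructor
  · intro h a ha b hb
    obtain ⟨w, hw, hdom⟩ :=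
      h {a, b} (by simp [Set.insert_subset_iff, ha, hb]) (by simp) Finset.card_le_two
    exact ⟨w, hw, hdom a (by simp), hdom b (by simp)⟩
  · intro h S hSU hS hcard
    obtain ⟨a, b, rfl⟩ : ∃ a b, S = {a, b} := by
      have hpos := hS.card_pos
      obtain hone | htwo : S.card = 1 ∨ S.card = 2 := by lia
      · obtain ⟨a, rfl⟩ := Finset.card_eq_one.1 hone
        exact ⟨a, a, by simp⟩
      · obtain ⟨a, b, -, rfl⟩ := Finset.card_eq_two.1 htwo
        exact ⟨a, b, rfl⟩
    obtain ⟨w, hw, haw, hbw⟩ := h a (hSU (by simp)) b (hSU (by simp))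
    exact ⟨w, hw, by simpa using ⟨haw, hbw⟩⟩

/-- `U` is the vertex set of a monochromatic 2-dominating subgraph for the 2-coloring whose color
classes are the relation `r` and its complement. -/
def IsMonoDirected (r : V → V → Prop) (U : Set V) : Prop :=
  DirectedOn r U ∨ DirectedOn rᶜ U

theorem isMonoDirected_compl {r : V → V → Prop} : IsMonoDirected rᶜ = IsMonoDirected r := by
  ext U
  rw [IsMonoDirected, IsMonoDirected, compl_compl, or_comm]

theorem IsMonoDirected.exists_isMonoDom {c : V → V → Color} {U : Set V}
    (h : IsMonoDirected (c · · = Color.red) U) : ∃ j, IsMonoDom c 2 j U := by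
  have eq_blue_of_ne_red : ∀ j : Color, j ≠ Color.red → j = Color.blue := by
    rintro (_ | _) <;> simp
  simp only [isMonoDom_two_iff_directedOn]
  rcases h with hred | hblue
  · exact ⟨Color.red, hred⟩
  · exact ⟨Color.blue, hblue.mono fun {a b} => eq_blue_of_ne_red (c a b)⟩

/-- `A` is covered by at most `n` sets with property `P`. The sets need not lie inside `A`. -/
def CoverableBy (P : Set V → Prop) (n : ℕ) (A : Set V) : Prop :=
  ∃ 𝒰 : Finset (Set V), 𝒰.card ≤ n ∧ A ⊆ ⋃₀ 𝒰 ∧ ∀ U ∈ 𝒰, P U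

namespace CoverableBy

variable {P : Set V → Prop} {m n : ℕ} {A B : Set V}

theorem mono_card (h : CoverableBy P m A) (hmn : m ≤ n) : CoverableBy P n A := by
  obtain ⟨𝒰, hcard, hcover, hP⟩ := h
  exact ⟨𝒰, hcard.trans hmn, hcover, hP⟩

theorem of_prop (h : P A) : CoverableBy P 1 A :=
  ⟨{A}, by simp, by simp, by simpa using h⟩

theorem union (hA : CoverableBy P m A) (hB : CoverableBy P n B) :
    CoverableBy P (m + n) (A ∪ B) := by
  classical
  obtain ⟨𝒰, h𝒰card, hA𝒰, h𝒰P⟩ := hA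
  obtain ⟨𝒲, h𝒲card, hB𝒲, h𝒲P⟩ := hB
  refine ⟨𝒰 ∪ 𝒲, (Finset.card_union_le 𝒰 𝒲).trans (add_le_add h𝒰card h𝒲card), ?_, ?_⟩
  · rw [Finset.coe_union, Set.sUnion_union]
    exact Set.union_subset_union hA𝒰 hB𝒲
  · intro U hU
    exact (Finset.mem_union.1 hU).elim (h𝒰P U) (h𝒲P U)

theorem exists_fin (h : CoverableBy P n A) :
    ∃ t ≤ n, ∃ U : Fin t → Set V, A ⊆ ⋃ i, U i ∧ ∀ i, P (U i) := by
  obtain ⟨𝒰, hcard, hcover, hP⟩ := h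
  refine ⟨𝒰.card, hcard, fun i => 𝒰.equivFin.symm i, ?_, fun i => hP _ (𝒰.equivFin.symm i).2⟩
  rw [Set.sUnion_eq_iUnion] at hcover
  exact hcover.trans (𝒰.equivFin.symm.surjective.iUnion_comp fun U : 𝒰 => (U : Set V)).ge

end CoverableBy

section Relation

variable {r : V → V → Prop} {A : Set V} {u v w x : V}

theorem directedOn_of_rel_or_rel (h : ∀ a ∈ A, ∀ b ∈ A, r a b ∨ r b a) : DirectedOn r A := by
  have hrefl : ∀ a ∈ A, r a a := fun a ha => (h a ha a ha).elim id id
  intro a ha b hb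
  rcases h a ha b hb with hab | hba
  · exact ⟨b, hb, hab, hrefl b hb⟩
  · exact ⟨a, ha, hrefl a ha, hba⟩

theorem directedOn_sep_rel (hxA : x ∈ A) (hx : r x x) : DirectedOn r {a ∈ A | r a x} :=
  fun _ ha _ hb => ⟨x, ⟨hxA, hx⟩, ha.2, hb.2⟩

theorem directedOn_insert_insert_of_antisymmRel (huv : AntisymmRel r u v)
    (huw : AntisymmRel r u w) (hvw : AntisymmRel r v w) :
    DirectedOn r (insert u (insert v {a | r a u ∧ r a v})) := by
  set T : Set V := insert u (insert v {a | r a u ∧ r a v})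
  have hu : u ∈ T := .inl rfl
  have hv : v ∈ T := .inr (.inl rfl)
  have hw : w ∈ T := .inr (.inr ⟨huw.2, hvw.2⟩)
  rintro a (rfl | rfl | ⟨hau, hav⟩) b (rfl | rfl | ⟨hbu, hbv⟩)
  · exact ⟨v, hv, huv.1, huv.1⟩
  · exact ⟨w, hw, huw.1, hvw.1⟩
  · exact ⟨v, hv, huv.1, hbv⟩
  · exact ⟨w, hw, hvw.1, huw.1⟩
  · exact ⟨u, hu, huv.2, huv.2⟩
  · exact ⟨u, hu, huv.2, hbu⟩
  · exact ⟨v, hv, hav, huv.1⟩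
  · exact ⟨u, hu, hau, huv.2⟩
  · exact ⟨u, hu, hau, hbu⟩

theorem coverableBy_three_of_bidirected_triangle (huA : u ∈ A) (hvA : v ∈ A)
    (hu : r u u) (hv : r v v) (huv : AntisymmRel rᶜ u v) (huw : AntisymmRel rᶜ u w)
    (hvw : AntisymmRel rᶜ v w) :
    CoverableBy (IsMonoDirected r) 3 A := by
  classical
  refine ⟨{{a ∈ A | r a u}, {a ∈ A | r a v}, insert u (insert v {a | rᶜ a u ∧ rᶜ a v})},
    Finset.card_le_three, fun a ha => ?_, ?_⟩
  · by_cases hau : r a u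
    · exact ⟨{a ∈ A | r a u}, by simp, ha, hau⟩
    by_cases hav : r a v
    · exact ⟨{a ∈ A | r a v}, by simp, ha, hav⟩
    exact ⟨insert u (insert v {a | rᶜ a u ∧ rᶜ a v}), by simp, .inr (.inr ⟨hau, hav⟩)⟩
  · simp only [Finset.forall_mem_insert, Finset.mem_singleton, forall_eq]
    exact ⟨.inl (directedOn_sep_rel huA hu), .inl (directedOn_sep_rel hvA hv),
      .inr (directedOn_insert_insert_of_antisymmRel huv huw hvw)⟩

/-- No three vertices of `A` are pairwise joined by `r`-edges in both directions. The three vertices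
need not be distinct, which makes a difference only at vertices with an `r`-loop. -/
def BidirectedTriangleFree (r : V → V → Prop) (A : Set V) : Prop :=
  ∀ u ∈ A, ∀ v ∈ A, ∀ w ∈ A, AntisymmRel r u v → AntisymmRel r u w → ¬ AntisymmRel r v w

theorem directedOn_sep_antisymmRel_compl (hu : u ∈ A) (hA : BidirectedTriangleFree rᶜ A) :
    DirectedOn r {a ∈ A | AntisymmRel rᶜ u a} := by
  refine directedOn_of_rel_or_rel fun a ⟨haA, hua⟩ b ⟨hbA, hub⟩ => ?_
  by_contra! hab
  exact hA u hu a haA b hbA hua hub hab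

theorem coverableBy_four_of_bidirectedTriangleFree (hrefl : ∀ a ∈ A, r a a)
    (hfree : BidirectedTriangleFree rᶜ A) :
    CoverableBy (IsMonoDirected r) 4 A := by
  classical
  by_cases hdir : DirectedOn r A
  · exact (CoverableBy.of_prop (.inl hdir)).mono_card (by simp)
  obtain ⟨u, hu, v, hv, huv⟩ : ∃ u ∈ A, ∃ v ∈ A, ∀ a ∈ A, r u a → ¬ r v a := by
    simpa only [DirectedOn, not_forall, not_exists, not_and, exists_prop] using hdir
  refine ⟨{{a ∈ A | r a u}, {a ∈ A | r a v}, {a ∈ A | AntisymmRel rᶜ u a},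
    {a ∈ A | AntisymmRel rᶜ v a}}, Finset.card_le_four, fun a ha => ?_, ?_⟩
  · by_cases hau : r a u
    · exact ⟨{a ∈ A | r a u}, by simp, ha, hau⟩
    by_cases hav : r a v
    · exact ⟨{a ∈ A | r a v}, by simp, ha, hav⟩
    by_cases hua : r u a
    · exact ⟨{a ∈ A | AntisymmRel rᶜ v a}, by simp, ha, huv a ha hua, hav⟩
    · exact ⟨{a ∈ A | AntisymmRel rᶜ u a}, by simp, ha, hua, hau⟩
  · simp only [Finset.forall_mem_insert, Finset.mem_singleton, forall_eq]
    exact ⟨.inl (directedOn_sep_rel hu (hrefl u hu)), .inl (directedOn_sep_rel hv (hrefl v hv)),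
      .inl (directedOn_sep_antisymmRel_compl hu hfree),
      .inl (directedOn_sep_antisymmRel_compl hv hfree)⟩

theorem coverableBy_four_of_forall_rel_self (hrefl : ∀ a ∈ A, r a a) :
    CoverableBy (IsMonoDirected r) 4 A := by
  by_cases hfree : BidirectedTriangleFree rᶜ A
  · exact coverableBy_four_of_bidirectedTriangleFree hrefl hfree
  simp only [BidirectedTriangleFree, not_forall, not_not, exists_prop] at hfree
  obtain ⟨u, hu, v, hv, w, -, huv, huw, hvw⟩ := hfree
  exact (coverableBy_three_of_bidirected_triangle hu hv (hrefl u hu) (hrefl v hv)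
    huv huw hvw).mono_card (by simp)

theorem coverableBy_eight_univ (r : V → V → Prop) :
    CoverableBy (IsMonoDirected r) 8 Set.univ := by
  have hloop : CoverableBy (IsMonoDirected r) 4 {a | r a a} :=
    coverableBy_four_of_forall_rel_self fun _ ha => ha
  have hnoloop : CoverableBy (IsMonoDirected r) 4 {a | r a a}ᶜ := by
    rw [← isMonoDirected_compl]
    exact coverableBy_four_of_forall_rel_self fun _ ha => ha
  simpa only [Set.union_compl_self] using hloop.union hnoloop

end Relation

end

/-- Theorem: every 2-colored complete digraph on a (finite or infinite) vertex set `V`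
can be covered by at most 8 monochromatic 2-dominating subgraphs. -/
theorem cover_by_eight_mono_two_dominating {V : Type*} (c : V → V → Color) :
    ∃ t : ℕ, t ≤ 8 ∧
      ∃ (U : Fin t → Set V) (j : Fin t → Color),
        (⋃ i, U i) = Set.univ ∧ ∀ i, IsMonoDom c 2 (j i) (U i) := by
  obtain ⟨t, ht, U, hcover, hU⟩ := (coverableBy_eight_univ (c · · = Color.red)).exists_fin
  choose j hj using fun i => (hU i).exists_isMonoDom
  exact ⟨t, ht, U, j, Set.univ_subset_iff.1 hcover, hj⟩
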